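/- Let k be a field and C a Krull–Schmidt, Hom-finite, k-linear triangulated category with a cluster tilting object T. Let X ∈ add T be an indecomposable object. Then X admits two almost split triangles X → Y' → Z' → X[1] and X[−1] → Z'' → Y'' → X, in which Z' and Z'' have no nonzero direct summands belonging to add T. -/

import Mathlib

open CategoryTheory CategoryTheory.Limits CategoryTheory.Pretriangulated

universe v u

variable (k : Type*) [Field k]
variable (C : Type u) [Category.{v} C] [Preadditive C] [HasZeroObject C] [HasShift C ℤ]
  [∀ n : ℤ, (shiftFunctor C n).Additive] [Pretriangulated C]
  [HasFiniteBiproducts C] [Linear k C]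

/-- `C` is Krull–Schmidt: every object is isomorphic to a finite direct sum of objects
with local endomorphism rings. -/
def KrullSchmidt : Prop :=
  ∀ X : C, ∃ (n : ℕ) (f : Fin n → C) (_ : X ≅ ⨁ f), ∀ i, IsLocalRing (End (f i))

/-- `add T`: the objects isomorphic to direct summands of finite direct sums of copies
of `T`, described as retracts of finite powers `T^n`. -/
def addSet (T : C) : Set C :=
  {X | ∃ (n : ℕ) (i : X ⟶ ⨁ (fun _ : Fin n => T)) (p : ⨁ (fun _ : Fin n => T) ⟶ X),
    i ≫ p = 𝟙 X}

/-- `T` is a cluster tilting object: for every `X`, membership in `add T` is equivalent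
to the vanishing of `Hom(T, X[1])` and to the vanishing of `Hom(X, T[1])`. -/
def ClusterTilting (T : C) : Prop :=
  ∀ X : C, (X ∈ addSet C T ↔ ∀ f : T ⟶ X⟦(1 : ℤ)⟧, f = 0) ∧
           (X ∈ addSet C T ↔ ∀ f : X ⟶ T⟦(1 : ℤ)⟧, f = 0)

/-- An object is indecomposable if it is nonzero and in any biproduct decomposition one
summand vanishes. -/
def Indecomposable (X : C) : Prop :=
  ¬ IsZero X ∧ ∀ (Y Z : C), (X ≅ Y ⊞ Z) → IsZero Y ∨ IsZero Z

/-- `x : A ⟶ B` is left almost split: any morphism out of `A` which is not a section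
factors through `x`. -/
def LeftAlmostSplit {A B : C} (x : A ⟶ B) : Prop :=
  ∀ ⦃M : C⦄ (a : A ⟶ M), (¬ ∃ r : M ⟶ A, a ≫ r = 𝟙 A) → ∃ m : B ⟶ M, x ≫ m = a

/-- `y : B ⟶ X` is right almost split: any morphism into `X` which is not a retraction
factors through `y`. -/
def RightAlmostSplit {B X : C} (y : B ⟶ X) : Prop :=
  ∀ ⦃N : C⦄ (c : N ⟶ X), (¬ ∃ s : X ⟶ N, s ≫ c = 𝟙 X) → ∃ n : N ⟶ B, n ≫ y = c

/-- An almost split (Auslander–Reiten) triangle: a nonsplit distinguished triangle whose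
first morphism is left almost split and whose second morphism is right almost split. -/
def IsAlmostSplitTriangle {A B X : C} (x : A ⟶ B) (y : B ⟶ X)
    (δ : X ⟶ A⟦(1 : ℤ)⟧) : Prop :=
  (Triangle.mk x y δ ∈ distTriang C) ∧ δ ≠ 0 ∧
    LeftAlmostSplit C x ∧ RightAlmostSplit C y


/-!
Both triangles come from one morphism `δ : V ⟶ X` with local `End V` which factors through every
nonzero morphism into `X`: its shifts by `0` and `1` complete to almost split triangles. With a
Serre functor `S`, `δ` would be the morphism `S⁻¹ X ⟶ X` corresponding to a functional on `End X`
that kills the radical. Without one, `V` is replaced by a morphism `v : V ⟶ P` with `P ∈ add T`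
such that the image of `Hom(v, -)` is the dual of `Hom(-, X)` on `add T`. This suffices because
every `N` lies in a triangle `N ⟶ T₁ ⟶ T₀ ⟶ N[1]` with `T₁` and `T₀` in `add T`: a nonzero
`f : N ⟶ X` extends to `T₁ ⟶ X`, the functional extends to one on `Hom(T₁, X)` that kills the
maps factoring through `T₀`, and the corresponding morphism `V ⟶ T₁` lifts to `N`.

The connecting morphism of an almost split triangle is nonzero on every nonzero summand of the
third term, whereas morphisms from `add T` to `X[1]` vanish.
-/

section LinearAlgebra

variable {K : Type*} [Field K]

theorem exists_dual_comp_eq_and_comp_eq_zero {U V W : Type*} [AddCommGroup U] [AddCommGroup V]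
    [AddCommGroup W] [Module K U] [Module K V] [Module K W] {f : U →ₗ[K] V} {g : W →ₗ[K] V}
    {φ : Module.Dual K U} (h : (LinearMap.range g).comap f ≤ LinearMap.ker φ) :
    ∃ ψ : Module.Dual K V, ψ ∘ₗ f = φ ∧ ψ ∘ₗ g = 0 := by
  have hφ : φ ∈ (LinearMap.ker ((LinearMap.range g).mkQ ∘ₗ f)).dualAnnihilator := by
    rwa [LinearMap.ker_comp, Submodule.ker_mkQ, Submodule.mem_dualAnnihilator]
  rw [← LinearMap.range_dualMap_eq_dualAnnihilator_ker] at hφ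
  obtain ⟨ψ, hψ⟩ := hφ
  refine ⟨ψ ∘ₗ (LinearMap.range g).mkQ, hψ, ?_⟩
  rw [LinearMap.comp_assoc, LinearMap.range_mkQ_comp, LinearMap.comp_zero]

theorem exists_dual_ne_zero_forall_nonunits_eq_zero (A : Type*) [Ring A] [Algebra K A]
    [IsLocalRing A] : ∃ φ : Module.Dual K A, φ ≠ 0 ∧ ∀ a ∈ nonunits A, φ a = 0 := by
  let J : Submodule K A :=
    { IsLocalRing.nonunitsAddSubmonoid A with
      smul_mem' := fun c a ha h ↦ by
        rcases eq_or_ne c 0 with rfl | hc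
        · exact not_isUnit_zero (zero_smul K a ▸ h)
        · exact ha ((isUnit_smul_iff (Units.mk0 c hc) a).1 h) }
  have one_notMem : (1 : A) ∉ J := fun h ↦ h isUnit_one
  obtain ⟨φ, hφ, hJ⟩ := Submodule.exists_le_ker_of_notMem one_notMem
  exact ⟨φ, fun h ↦ hφ (by rw [h, LinearMap.zero_apply]), fun a ha ↦ hJ ha⟩

end LinearAlgebra

section LocalEndomorphismRing

variable {𝒞 : Type*} [Category* 𝒞] [Preadditive 𝒞]

theorem isLocalRing_of_ringEquiv {R S : Type*} [Semiring R] [Semiring S] [IsLocalRing S]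
    (e : R ≃+* S) : IsLocalRing R :=
  have : IsLocalHom (e : R →+* S) := ⟨fun a h ↦ (isUnit_map_iff e a).1 h⟩
  (e : R →+* S).domain_isLocalRing

theorem not_isZero_of_isLocalRing_end (X : 𝒞) [IsLocalRing (End X)] : ¬ IsZero X :=
  fun h ↦ one_ne_zero (α := End X) (h.eq_of_src _ _)

theorem isIso_id_sub_of_not_isIso {X : 𝒞} [IsLocalRing (End X)] {r : X ⟶ X} (hr : ¬ IsIso r) :
    IsIso (𝟙 X - r) := by
  have h : IsUnit (M := End X) r ∨ IsUnit (M := End X) (𝟙 X - r) :=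
    IsLocalRing.isUnit_or_isUnit_of_add_one (R := End X) (add_sub_cancel (G := X ⟶ X) r (𝟙 X))
  simpa only [isUnit_iff_isIso, hr, false_or] using h

theorem isIso_of_comp_eq_right {X Y : 𝒞} [IsLocalRing (End X)] {r : X ⟶ X} {f : X ⟶ Y}
    (hf : f ≠ 0) (h : r ≫ f = f) : IsIso r := by
  by_contra hr
  have := isIso_id_sub_of_not_isIso hr
  refine hf ((cancel_epi (𝟙 X - r)).1 ?_)
  rw [Preadditive.sub_comp, Category.id_comp, h, sub_self, comp_zero]

theorem isIso_of_comp_eq_left {X Y : 𝒞} [IsLocalRing (End Y)] {r : Y ⟶ Y} {f : X ⟶ Y}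
    (hf : f ≠ 0) (h : f ≫ r = f) : IsIso r := by
  by_contra hr
  have := isIso_id_sub_of_not_isIso hr
  refine hf ((cancel_mono (𝟙 Y - r)).1 ?_)
  rw [Preadditive.comp_sub, Category.comp_id, h, sub_self, zero_comp]

theorem isLocalRing_end_of_iso {X Y : 𝒞} (e : X ≅ Y) [IsLocalRing (End X)] :
    IsLocalRing (End Y) :=
  let conj : End Y ≃+* End X :=
    { e.symm.conj with
      map_add' := fun _ _ ↦ (congrArg (e.hom ≫ ·) (Preadditive.add_comp ..)).trans
        (Preadditive.comp_add ..) }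
  isLocalRing_of_ringEquiv conj

theorem isLocalRing_end_obj {𝒟 : Type*} [Category* 𝒟] [Preadditive 𝒟] (F : 𝒞 ⥤ 𝒟) [F.Additive]
    [F.Full] [F.Faithful] (X : 𝒞) [IsLocalRing (End X)] : IsLocalRing (End (F.obj X)) :=
  let map : End X ≃+* End (F.obj X) :=
    { (Functor.FullyFaithful.ofFullyFaithful F).mulEquivEnd X with
      map_add' := fun _ _ ↦ F.map_add }
  isLocalRing_of_ringEquiv map.symm

theorem KrullSchmidt.exists_retract_comp_ne_zero [HasFiniteBiproducts 𝒞] (hKS : KrullSchmidt 𝒞)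
    {X Y : 𝒞} {f : X ⟶ Y} (hf : f ≠ 0) :
    ∃ (W : 𝒞) (r : Retract W X), IsLocalRing (End W) ∧ r.i ≫ f ≠ 0 := by
  obtain ⟨n, W, e, hW⟩ := hKS X
  obtain ⟨j, hj⟩ : ∃ j, biproduct.ι W j ≫ e.inv ≫ f ≠ 0 := by
    by_contra! h
    exact hf ((cancel_epi e.inv).1 (biproduct.hom_ext' _ _ fun j ↦ by simpa using h j))
  exact ⟨W j, ⟨biproduct.ι W j ≫ e.inv, e.hom ≫ biproduct.π W j, by simp⟩, hW j, by simpa using hj⟩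

end LocalEndomorphismRing

section SocleGenerator

variable {𝒞 : Type*} [Category* 𝒞]

/-- `δ : V ⟶ X` generates the socle of the functor `Hom(-, X)`, and this socle is simple and
essential: `δ` is nonzero and lies in every nonzero subfunctor. -/
structure IsSocleGenerator [HasZeroMorphisms 𝒞] {V X : 𝒞} (δ : V ⟶ X) : Prop where
  ne_zero : δ ≠ 0
  exists_comp_eq : ∀ ⦃N : 𝒞⦄ (f : N ⟶ X), f ≠ 0 → ∃ g : V ⟶ N, g ≫ f = δ

namespace IsSocleGenerator

section HasZeroMorphisms

variable [HasZeroMorphisms 𝒞] {V X : 𝒞} {δ : V ⟶ X}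

theorem precomp (hδ : IsSocleGenerator δ) {W : 𝒞} {i : W ⟶ V} (hi : i ≫ δ ≠ 0) :
    IsSocleGenerator (i ≫ δ) where
  ne_zero := hi
  exists_comp_eq N f hf := by
    obtain ⟨g, rfl⟩ := hδ.exists_comp_eq f hf
    exact ⟨i ≫ g, Category.assoc ..⟩

theorem comp_iso (hδ : IsSocleGenerator δ) {Y : 𝒞} (e : X ≅ Y) : IsSocleGenerator (δ ≫ e.hom) where
  ne_zero h := hδ.ne_zero ((cancel_mono e.hom).1 (h.trans zero_comp.symm))
  exists_comp_eq N f hf := by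
    obtain ⟨g, hg⟩ := hδ.exists_comp_eq (f ≫ e.inv) fun h ↦
      hf ((cancel_mono e.inv).1 (h.trans zero_comp.symm))
    exact ⟨g, by simp [← hg]⟩

theorem map {𝒟 : Type*} [Category* 𝒟] [HasZeroMorphisms 𝒟] (F : 𝒞 ⥤ 𝒟) [F.IsEquivalence]
    (hδ : IsSocleGenerator δ) : IsSocleGenerator (F.map δ) where
  ne_zero h := hδ.ne_zero ((F.map_eq_zero_iff).1 h)
  exists_comp_eq N f hf := by
    let e := F.objObjPreimageIso N
    obtain ⟨f', hf'⟩ := F.map_surjective (e.hom ≫ f)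
    obtain ⟨g, hg⟩ := hδ.exists_comp_eq f' fun h ↦ hf (by
      rw [← cancel_epi e.hom, ← hf', h, F.map_zero, comp_zero])
    exact ⟨F.map g ≫ e.hom, by rw [Category.assoc, ← hf', ← F.map_comp, hg]⟩

end HasZeroMorphisms

theorem exists_isLocalRing_end [Preadditive 𝒞] [HasFiniteBiproducts 𝒞] {V X : 𝒞} {δ : V ⟶ X}
    (hδ : IsSocleGenerator δ) (hKS : KrullSchmidt 𝒞) :
    ∃ (W : 𝒞) (ε : W ⟶ X), IsLocalRing (End W) ∧ IsSocleGenerator ε := by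
  obtain ⟨W, r, hW, hr⟩ := hKS.exists_retract_comp_ne_zero hδ.ne_zero
  exact ⟨W, r.i ≫ δ, hW, hδ.precomp hr⟩

end IsSocleGenerator

end SocleGenerator

section AlmostSplitTriangle

variable {𝒞 : Type*} [Category* 𝒞] [Preadditive 𝒞] [HasZeroObject 𝒞] [HasShift 𝒞 ℤ]
  [∀ n : ℤ, (shiftFunctor 𝒞 n).Additive] [Pretriangulated 𝒞]

theorem isIso_i_of_indecomposable {W X : 𝒞} (r : Retract W X) (hW : ¬ IsZero W)
    (hX : Indecomposable 𝒞 X) : IsIso r.i := by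
  obtain ⟨Z, g, h, hT⟩ := distinguished_cocone_triangle r.i
  have h_eq_zero : h = 0 :=
    Triangle.mor₃_eq_zero_of_mono₁ _ hT (inferInstanceAs (Mono r.i))
  obtain ⟨e, -, -⟩ := exists_iso_binaryBiproduct_of_distTriang _ hT h_eq_zero
  exact (Triangle.isZero₃_iff_isIso₁ _ hT).1 ((hX.2 _ _ e).resolve_left hW)

theorem isLocalRing_end_of_indecomposable [HasFiniteBiproducts 𝒞] (hKS : KrullSchmidt 𝒞) {X : 𝒞}
    (hX : Indecomposable 𝒞 X) : IsLocalRing (End X) := by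
  have id_ne_zero : 𝟙 X ≠ 0 := fun h ↦ hX.1 ((IsZero.iff_id_eq_zero X).2 h)
  obtain ⟨W, r, hW, -⟩ := hKS.exists_retract_comp_ne_zero id_ne_zero
  have := isIso_i_of_indecomposable r (not_isZero_of_isLocalRing_end W) hX
  exact isLocalRing_end_of_iso (asIso r.i)

section

variable {A Y Z : 𝒞} {x : A ⟶ Y} {y : Y ⟶ Z} {δ : Z ⟶ A⟦(1 : ℤ)⟧}

theorem exists_comp_eq_of_comp_shift_eq_zero (hT : Triangle.mk x y δ ∈ distTriang 𝒞) {M : 𝒞}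
    {a : A ⟶ M} (ha : δ ≫ a⟦(1 : ℤ)⟧' = 0) : ∃ m : Y ⟶ M, x ≫ m = a := by
  obtain ⟨m, hm, -⟩ := complete_distinguished_triangle_morphism₂ _ _ hT
    (contractible_distinguished M) a 0 (ha.trans zero_comp.symm)
  exact ⟨m, hm.trans (Category.comp_id a)⟩

theorem rightAlmostSplit_of_isSocleGenerator [IsLocalRing (End Z)]
    (hT : Triangle.mk x y δ ∈ distTriang 𝒞) (hδ : IsSocleGenerator δ) : RightAlmostSplit 𝒞 y := by
  intro N c hc
  suffices c ≫ δ = 0 by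
    obtain ⟨n, hn⟩ := Triangle.coyoneda_exact₃ _ hT c this
    exact ⟨n, hn.symm⟩
  by_contra hcδ
  obtain ⟨g, hg⟩ := hδ.exists_comp_eq _ hcδ
  have := isIso_of_comp_eq_right hδ.ne_zero ((Category.assoc ..).trans hg : (g ≫ c) ≫ δ = δ)
  exact hc ⟨inv (g ≫ c) ≫ g, by rw [Category.assoc, IsIso.inv_hom_id]⟩

theorem leftAlmostSplit_of_rightAlmostSplit [IsLocalRing (End A)]
    (hT : Triangle.mk x y δ ∈ distTriang 𝒞) (hδ : δ ≠ 0) (hy : RightAlmostSplit 𝒞 y) :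
    LeftAlmostSplit 𝒞 x := by
  intro M a ha
  suffices δ ≫ a⟦(1 : ℤ)⟧' = 0 from exists_comp_eq_of_comp_shift_eq_zero hT this
  by_contra haδ
  obtain ⟨W, x', y', hT'⟩ := distinguished_cocone_triangle₂ (δ ≫ a⟦(1 : ℤ)⟧')
  have hy'δ : y' ≫ δ ≫ a⟦(1 : ℤ)⟧' = 0 := comp_distTriang_mor_zero₂₃ _ hT'
  have hy' : ¬ ∃ s : Z ⟶ W, s ≫ y' = 𝟙 Z := fun ⟨s, hs⟩ ↦ haδ (by
    rw [← Category.id_comp (δ ≫ _), ← hs, Category.assoc, hy'δ, comp_zero])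
  obtain ⟨w, hw⟩ := hy y' hy'
  obtain ⟨b, hb⟩ : ∃ b : M ⟶ A, (δ ≫ a⟦(1 : ℤ)⟧') ≫ b⟦(1 : ℤ)⟧' = δ := by
    obtain ⟨b, -, hb⟩ := complete_distinguished_triangle_morphism₁ _ _ hT' hT w (𝟙 Z)
      ((Category.comp_id y').trans hw.symm)
    exact ⟨b, hb.trans (Category.id_comp δ)⟩
  have hab : δ ≫ (a ≫ b)⟦(1 : ℤ)⟧' = δ := by rw [Functor.map_comp, ← Category.assoc, hb]
  have := isLocalRing_end_obj (shiftFunctor 𝒞 (1 : ℤ)) A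
  have := isIso_of_comp_eq_left hδ hab
  have : IsIso (a ≫ b) := isIso_of_reflects_iso _ (shiftFunctor 𝒞 (1 : ℤ))
  exact ha ⟨b ≫ inv (a ≫ b), by rw [← Category.assoc, IsIso.hom_inv_id]⟩

theorem IsSocleGenerator.exists_isAlmostSplitTriangle [IsLocalRing (End A)]
    [IsLocalRing (End Z)] (hδ : IsSocleGenerator δ) :
    ∃ (Y : 𝒞) (x : A ⟶ Y) (y : Y ⟶ Z), IsAlmostSplitTriangle 𝒞 x y δ := by
  obtain ⟨Y, x, y, hT⟩ := distinguished_cocone_triangle₂ δ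
  have hy := rightAlmostSplit_of_isSocleGenerator hT hδ
  exact ⟨Y, x, y, hT, hδ.ne_zero, leftAlmostSplit_of_rightAlmostSplit hT hδ.ne_zero hy, hy⟩

theorem IsAlmostSplitTriangle.isZero_of_retract₃ (h : IsAlmostSplitTriangle 𝒞 x y δ) {D : 𝒞}
    (r : Retract D Z) (hr : r.i ≫ δ = 0) : IsZero D := by
  obtain ⟨hT, hδ, -, hy⟩ := h
  have hyδ : y ≫ δ = 0 := comp_distTriang_mor_zero₂₃ _ hT
  obtain ⟨s, hs⟩ : ∃ s : Z ⟶ Z, s ≫ (𝟙 Z - r.r ≫ r.i) = 𝟙 Z := by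
    by_contra h_not_retraction
    obtain ⟨m, hm⟩ := hy _ h_not_retraction
    have : (𝟙 Z - r.r ≫ r.i) ≫ δ = 0 := by rw [← hm, Category.assoc, hyδ, comp_zero]
    exact hδ (by simpa [hr] using this)
  have r_eq_zero : r.r = 0 := by
    rw [← Category.id_comp r.r, ← hs, Category.assoc, Preadditive.sub_comp, Category.assoc,
      r.retract, Category.id_comp, Category.comp_id, sub_self, comp_zero]
  rw [IsZero.iff_id_eq_zero, ← r.retract, r_eq_zero, comp_zero]

theorem IsAlmostSplitTriangle.isZero_of_retract₂ (h : IsAlmostSplitTriangle 𝒞 x y δ) {D : 𝒞}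
    (r : Retract D Y) (hr : x ≫ r.r = 0) : IsZero D := by
  obtain ⟨q, hq⟩ : ∃ q : Z ⟶ D, r.r = y ≫ q := Triangle.yoneda_exact₂ _ h.1 r.r hr
  have hyδ : y ≫ δ = 0 := comp_distTriang_mor_zero₂₃ _ h.1
  exact h.isZero_of_retract₃ ⟨r.i ≫ y, q, by rw [Category.assoc, ← hq, r.retract]⟩
    (by rw [Category.assoc, hyδ, comp_zero])

end

end AlmostSplitTriangle

section AddSet

variable {𝒞 : Type*} [Category* 𝒞] [Preadditive 𝒞] [HasFiniteBiproducts 𝒞] {T : 𝒞}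

theorem biproduct_mem_addSet (T : 𝒞) (n : ℕ) : (⨁ fun _ : Fin n ↦ T) ∈ addSet 𝒞 T :=
  ⟨n, 𝟙 _, 𝟙 _, Category.comp_id _⟩

theorem exists_sum_comp_eq_id_of_mem_addSet {D : 𝒞} (hD : D ∈ addSet 𝒞 T) :
    ∃ (n : ℕ) (a : Fin n → (D ⟶ T)) (b : Fin n → (T ⟶ D)), ∑ i, a i ≫ b i = 𝟙 D := by
  obtain ⟨n, i, p, hip⟩ := hD
  refine ⟨n, fun j ↦ i ≫ biproduct.π _ j, fun j ↦ biproduct.ι (fun _ ↦ T) j ≫ p, ?_⟩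
  rw [← biproduct.lift_desc, ← hip]
  congr 1 <;> ext <;> simp

theorem hom_eq_zero_of_mem_addSet {D W : 𝒞} (hD : D ∈ addSet 𝒞 T) (h : ∀ f : T ⟶ W, f = 0)
    (f : D ⟶ W) : f = 0 := by
  obtain ⟨n, a, b, hab⟩ := exists_sum_comp_eq_id_of_mem_addSet hD
  rw [← Category.id_comp f, ← hab, Preadditive.sum_comp]
  exact Finset.sum_eq_zero fun i _ ↦ by rw [Category.assoc, h (b i ≫ f), comp_zero]

theorem exists_comp_eq_of_mem_addSet {N M D : 𝒞} {π : N ⟶ M}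
    (hπ : ∀ f : N ⟶ T, ∃ h : M ⟶ T, π ≫ h = f) (hD : D ∈ addSet 𝒞 T) (f : N ⟶ D) :
    ∃ h : M ⟶ D, π ≫ h = f := by
  obtain ⟨n, a, b, hab⟩ := exists_sum_comp_eq_id_of_mem_addSet hD
  choose h hh using fun i ↦ hπ (f ≫ a i)
  refine ⟨∑ i, h i ≫ b i, ?_⟩
  simp_rw [Preadditive.comp_sum, ← Category.assoc, hh, Category.assoc, ← Preadditive.comp_sum,
    hab, Category.comp_id]

theorem exists_biproduct_lift_of_fg {R : Type*} [CommRing R] [Linear R 𝒞] {N : 𝒞}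
    {K : Submodule R (N ⟶ T)} (hK : K.FG) :
    ∃ (n : ℕ) (u : N ⟶ ⨁ fun _ : Fin n ↦ T), (∀ j, u ≫ biproduct.π _ j ∈ K) ∧
      ∀ f ∈ K, ∃ h : (⨁ fun _ : Fin n ↦ T) ⟶ T, u ≫ h = f := by
  obtain ⟨n, s, rfl⟩ := Submodule.fg_iff_exists_fin_generating_family.1 hK
  refine ⟨n, biproduct.lift s, fun j ↦ ?_, fun f hf ↦ ?_⟩
  · rw [biproduct.lift_π]
    exact Submodule.subset_span ⟨j, rfl⟩
  · obtain ⟨c, rfl⟩ := (Submodule.mem_span_range_iff_exists_fun R).1 hf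
    exact ⟨biproduct.desc fun j ↦ c j • 𝟙 T, by simp [biproduct.lift_desc]⟩

end AddSet

section ClusterTilting

variable {𝒞 : Type*} [Category* 𝒞] [Preadditive 𝒞] [HasShift 𝒞 ℤ]
  [HasFiniteBiproducts 𝒞] {T : 𝒞}

namespace ClusterTilting

theorem hom_shift_eq_zero (hT : ClusterTilting 𝒞 T) {D E : 𝒞} (hD : D ∈ addSet 𝒞 T)
    (hE : E ∈ addSet 𝒞 T) (f : D ⟶ E⟦(1 : ℤ)⟧) : f = 0 :=
  hom_eq_zero_of_mem_addSet hD ((hT E).1.1 hE) f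

variable [∀ n : ℤ, (shiftFunctor 𝒞 n).Additive]

theorem hom_shift_neg_eq_zero (hT : ClusterTilting 𝒞 T) {D E : 𝒞} (hD : D ∈ addSet 𝒞 T)
    (hE : E ∈ addSet 𝒞 T) (f : D⟦(-1 : ℤ)⟧ ⟶ E) : f = 0 := by
  apply (shiftFunctor 𝒞 (1 : ℤ)).map_injective
  rw [Functor.map_zero, ← cancel_epi (shiftNegShift D (1 : ℤ)).inv, comp_zero]
  exact hT.hom_shift_eq_zero hD hE _

variable [HasZeroObject 𝒞] [Pretriangulated 𝒞]

theorem cone_mem_addSet (hT : ClusterTilting 𝒞 T) {N T₁ T₀ : 𝒞} {π : N ⟶ T₁} {d : T₁ ⟶ T₀}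
    {e : T₀ ⟶ N⟦(1 : ℤ)⟧} (hdist : Triangle.mk π d e ∈ distTriang 𝒞) (hT₁ : T₁ ∈ addSet 𝒞 T)
    (hπ : ∀ f : N ⟶ T, ∃ h : T₁ ⟶ T, π ≫ h = f) : T₀ ∈ addSet 𝒞 T := by
  refine (hT T₀).2.2 fun f ↦ ?_
  have hdf : d ≫ f = 0 := (hT T₁).2.1 hT₁ _
  obtain ⟨g, hg⟩ : ∃ g : N⟦(1 : ℤ)⟧ ⟶ T⟦(1 : ℤ)⟧, f = e ≫ g :=
    Triangle.yoneda_exact₃ _ hdist f hdf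
  obtain ⟨g', rfl⟩ := (shiftFunctor 𝒞 (1 : ℤ)).map_surjective g
  obtain ⟨h, rfl⟩ := hπ g'
  have heπ : e ≫ π⟦(1 : ℤ)⟧' = 0 := comp_distTriang_mor_zero₃₁ _ hdist
  rw [hg, Functor.map_comp, reassoc_of% heπ, zero_comp]

theorem exists_copresentation (R : Type*) [CommRing R] [Linear R 𝒞] (hT : ClusterTilting 𝒞 T)
    (N : 𝒞) [Module.Finite R (N ⟶ T)] :
    ∃ (T₁ T₀ : 𝒞) (π : N ⟶ T₁) (d : T₁ ⟶ T₀) (e : T₀ ⟶ N⟦(1 : ℤ)⟧),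
      Triangle.mk π d e ∈ distTriang 𝒞 ∧ T₁ ∈ addSet 𝒞 T ∧ T₀ ∈ addSet 𝒞 T ∧
      ∀ D ∈ addSet 𝒞 T, ∀ f : N ⟶ D, ∃ h : T₁ ⟶ D, π ≫ h = f := by
  obtain ⟨n, π, -, hπ⟩ :=
    exists_biproduct_lift_of_fg (Module.Finite.fg_top : (⊤ : Submodule R (N ⟶ T)).FG)
  replace hπ (f : N ⟶ T) := hπ f Submodule.mem_top
  obtain ⟨T₀, d, e, hdist⟩ := distinguished_cocone_triangle π
  have hT₁ := biproduct_mem_addSet T n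
  exact ⟨_, T₀, π, d, e, hdist, hT₁, hT.cone_mem_addSet hdist hT₁ hπ,
    fun D hD f ↦ exists_comp_eq_of_mem_addSet hπ hD f⟩

end ClusterTilting

end ClusterTilting

section YonedaDual

variable {R : Type*} [CommRing R] {𝒞 : Type*} [Category* 𝒞] [Preadditive 𝒞] [Linear R 𝒞]

/-- The natural transformation `Hom(P, -) ⟶ Hom_R(Hom(-, X), R)` that corresponds to
`φ : Hom(P, X) → R` under the Yoneda lemma: it sends `z` to the functional `φ (z ≫ -)`. -/
def yonedaDual {P X : 𝒞} (φ : Module.Dual R (P ⟶ X)) (D : 𝒞) :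
    (P ⟶ D) →ₗ[R] Module.Dual R (D ⟶ X) :=
  (Linear.comp P D X).compr₂ φ

@[simp]
theorem yonedaDual_apply {P X D : 𝒞} (φ : Module.Dual R (P ⟶ X)) (z : P ⟶ D) (s : D ⟶ X) :
    yonedaDual φ D z s = φ (z ≫ s) :=
  rfl

theorem yonedaDual_comp {P X D E : 𝒞} (φ : Module.Dual R (P ⟶ X)) (z : P ⟶ D) (f : D ⟶ E) :
    yonedaDual φ E (z ≫ f) = yonedaDual φ D z ∘ₗ Linear.leftComp R X f :=
  LinearMap.ext fun s ↦ by simp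

variable [HasFiniteBiproducts 𝒞]

theorem yonedaDual_surjective_of_mem_addSet {T P X D : 𝒞} {φ : Module.Dual R (P ⟶ X)}
    (hφ : Function.Surjective (yonedaDual φ T)) (hD : D ∈ addSet 𝒞 T) :
    Function.Surjective (yonedaDual φ D) := by
  intro ψ
  obtain ⟨n, a, b, hab⟩ := exists_sum_comp_eq_id_of_mem_addSet hD
  choose g hg using fun i ↦ hφ (ψ ∘ₗ Linear.leftComp R X (a i))
  refine ⟨∑ i, g i ≫ b i, LinearMap.ext fun s ↦ ?_⟩
  calc yonedaDual φ D (∑ i, g i ≫ b i) s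
      = ∑ i, yonedaDual φ T (g i) (b i ≫ s) := by simp [map_sum]
    _ = ψ ((∑ i, a i ≫ b i) ≫ s) := by simp [hg, Preadditive.sum_comp, -yonedaDual_apply]
    _ = ψ s := by rw [hab, Category.id_comp]

theorem exists_yonedaDual_surjective (T X : 𝒞) [Module.Finite R (Module.Dual R (T ⟶ X))] :
    ∃ (n : ℕ) (φ : Module.Dual R ((⨁ fun _ : Fin n ↦ T) ⟶ X)),
      Function.Surjective (yonedaDual φ T) := by
  obtain ⟨n, s, hs⟩ := Submodule.fg_iff_exists_fin_generating_family.1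
    (Module.Finite.fg_top : (⊤ : Submodule R (Module.Dual R (T ⟶ X))).FG)
  refine ⟨n, ∑ l, s l ∘ₗ Linear.leftComp R X (biproduct.ι (fun _ ↦ T) l), fun ψ ↦ ?_⟩
  obtain ⟨c, rfl⟩ := (Submodule.mem_span_range_iff_exists_fun R).1
    (hs.ge (Submodule.mem_top (x := ψ)))
  exact ⟨biproduct.desc fun l ↦ c l • 𝟙 T, LinearMap.ext fun t ↦ by simp⟩

/-- The pair `(φ, v)` computes the dual of `Hom(-, X)` on `add T`: the sequence
`Hom(P, D) → Hom_R(Hom(D, X), R) → 0` is exact for `D` in `add T`, and the kernel of its first map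
consists of the morphisms annihilated by `v`. So on `add T` the dual of `Hom(-, X)` is the
image of `Hom(v, -) : Hom(P, -) ⟶ Hom(V, -)`, which makes `V` a substitute for the inverse Serre
dual of `X`. -/
structure PresentsDual (T : 𝒞) {V P X : 𝒞} (φ : Module.Dual R (P ⟶ X)) (v : V ⟶ P) : Prop where
  surjective : ∀ D ∈ addSet 𝒞 T, Function.Surjective (yonedaDual φ D)
  comp_eq_zero_iff : ∀ D ∈ addSet 𝒞 T, ∀ z : P ⟶ D, v ≫ z = 0 ↔ yonedaDual φ D z = 0

end YonedaDual

section Existence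

variable {𝒞 : Type*} [Category* 𝒞] [Preadditive 𝒞] [HasZeroObject 𝒞] [HasShift 𝒞 ℤ]
  [∀ n : ℤ, (shiftFunctor 𝒞 n).Additive] [Pretriangulated 𝒞] [HasFiniteBiproducts 𝒞]

theorem exists_comp_eq_zero_iff_yonedaDual_eq_zero {R : Type*} [CommRing R] [IsNoetherianRing R]
    [Linear R 𝒞] (T : 𝒞) {P X : 𝒞} [Module.Finite R (P ⟶ T)] (φ : Module.Dual R (P ⟶ X)) :
    ∃ (V : 𝒞) (v : V ⟶ P), ∀ D ∈ addSet 𝒞 T, ∀ z : P ⟶ D,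
      v ≫ z = 0 ↔ yonedaDual φ D z = 0 := by
  obtain ⟨m, u, hu, hu'⟩ :=
    exists_biproduct_lift_of_fg (IsNoetherian.noetherian (LinearMap.ker (yonedaDual φ T)))
  obtain ⟨V, v, w, hdist⟩ := distinguished_cocone_triangle₁ u
  have hvu : v ≫ u = 0 := comp_distTriang_mor_zero₁₂ _ hdist
  have φ_u : yonedaDual φ _ u = 0 := by
    rw [← Category.comp_id u, ← biproduct.total, Preadditive.comp_sum, map_sum]
    refine Finset.sum_eq_zero fun j _ ↦ ?_
    rw [← Category.assoc, yonedaDual_comp, LinearMap.mem_ker.1 (hu j), LinearMap.zero_comp]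
  refine ⟨V, v, fun D hD z ↦ ⟨fun hz ↦ ?_, fun hz ↦ ?_⟩⟩
  · obtain ⟨t, rfl⟩ : ∃ t, z = u ≫ t := Triangle.yoneda_exact₂ _ hdist z hz
    rw [yonedaDual_comp, φ_u, LinearMap.zero_comp]
  · obtain ⟨n, a, b, hab⟩ := exists_sum_comp_eq_id_of_mem_addSet hD
    have hza (i) : v ≫ z ≫ a i = 0 := by
      obtain ⟨h, hh⟩ := hu' (z ≫ a i) (by
        rw [LinearMap.mem_ker, yonedaDual_comp, hz, LinearMap.zero_comp])
      rw [← hh, reassoc_of% hvu, zero_comp]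
    rw [← Category.comp_id z, ← hab, Preadditive.comp_sum, Preadditive.comp_sum]
    refine Finset.sum_eq_zero fun i _ ↦ ?_
    rw [reassoc_of% hza, zero_comp]

variable {k : Type*} [Field k] [Linear k 𝒞]

theorem exists_presentsDual (T X : 𝒞) [∀ Y : 𝒞, FiniteDimensional k (Y ⟶ T)]
    [FiniteDimensional k (T ⟶ X)] :
    ∃ (V P : 𝒞) (φ : Module.Dual k (P ⟶ X)) (v : V ⟶ P), PresentsDual T φ v := by
  obtain ⟨n, φ, hφ⟩ := exists_yonedaDual_surjective (R := k) T X
  obtain ⟨V, v, hv⟩ := exists_comp_eq_zero_iff_yonedaDual_eq_zero T φ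
  exact ⟨V, _, φ, v, fun D hD ↦ yonedaDual_surjective_of_mem_addSet hφ hD, hv⟩

theorem PresentsDual.isSocleGenerator_comp {T V P X : 𝒞} [∀ Y : 𝒞, FiniteDimensional k (Y ⟶ T)]
    {φ : Module.Dual k (P ⟶ X)} {v : V ⟶ P} (h : PresentsDual T φ v) (hT : ClusterTilting 𝒞 T)
    (hX : X ∈ addSet 𝒞 T) {z : P ⟶ X} (hz : yonedaDual φ X z ≠ 0)
    (hz' : ∀ e : X ⟶ X, ¬ IsIso e → yonedaDual φ X z e = 0) : IsSocleGenerator (v ≫ z) where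
  ne_zero := fun hvz ↦ hz ((h.comp_eq_zero_iff X hX z).1 hvz)
  exists_comp_eq N f hf := by
    obtain ⟨T₁, T₀, π, d, e, hdist, hT₁, hT₀, hπ⟩ := hT.exists_copresentation k N
    obtain ⟨p, rfl⟩ := hπ X hX f
    have hπd : π ≫ d = 0 := comp_distTriang_mor_zero₁₂ _ hdist
    obtain ⟨ψ, hψp, hψd⟩ : ∃ ψ : Module.Dual k (T₁ ⟶ X),
        ψ ∘ₗ Linear.leftComp k X p = yonedaDual φ X z ∧ ψ ∘ₗ Linear.leftComp k X d = 0 := by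
      refine exists_dual_comp_eq_and_comp_eq_zero ?_
      rintro e ⟨t, ht : d ≫ t = p ≫ e⟩
      refine hz' e fun _ ↦ hf ?_
      rw [← cancel_mono e, Category.assoc, ← ht, reassoc_of% hπd, zero_comp, zero_comp]
    obtain ⟨q, rfl⟩ := h.surjective T₁ hT₁ ψ
    have hvqd : v ≫ q ≫ d = 0 :=
      (h.comp_eq_zero_iff T₀ hT₀ _).2 ((yonedaDual_comp φ q d).trans hψd)
    have hvqp : v ≫ (q ≫ p - z) = 0 := (h.comp_eq_zero_iff X hX _).2 (by
      rw [map_sub, yonedaDual_comp, hψp, sub_self])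
    obtain ⟨g, hg⟩ : ∃ g : V ⟶ N, v ≫ q = g ≫ π :=
      Triangle.coyoneda_exact₂ _ hdist (v ≫ q) ((Category.assoc ..).trans hvqd)
    refine ⟨g, ?_⟩
    rwa [← reassoc_of% hg, ← sub_eq_zero, ← Preadditive.comp_sub]

theorem exists_isSocleGenerator [∀ X Y : 𝒞, FiniteDimensional k (X ⟶ Y)] {T : 𝒞}
    (hT : ClusterTilting 𝒞 T) {X : 𝒞} (hX : X ∈ addSet 𝒞 T) [IsLocalRing (End X)] :
    ∃ (V : 𝒞) (δ : V ⟶ X), IsSocleGenerator δ := by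
  obtain ⟨V, P, φ, v, h⟩ := exists_presentsDual (k := k) T X
  obtain ⟨ψ, hψ, hψ'⟩ := exists_dual_ne_zero_forall_nonunits_eq_zero (K := k) (End X)
  obtain ⟨z, rfl⟩ := h.surjective X hX ψ
  exact ⟨V, v ≫ z, h.isSocleGenerator_comp hT hX hψ fun e he ↦
    hψ' e (mt (isUnit_iff_isIso e).1 he)⟩

end Existence

/-- **Corollary 6.3.** Let `C` be a Krull–Schmidt, Hom-finite, `k`-linear triangulated
category with a cluster tilting object `T`, and let `X ∈ add T` be indecomposable.
Then `X` admits almost split triangles `X → Y' → Z' → X[1]` and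
`X[-1] → Z'' → Y'' → X` in which `Z'` and `Z''` have no nonzero direct summand
belonging to `add T`. -/
theorem heart_stmt_15 [∀ X Y : C, FiniteDimensional k (X ⟶ Y)]
    (hKS : KrullSchmidt C) (T : C) (hT : ClusterTilting C T)
    {X : C} (hX : X ∈ addSet C T) (hind : Indecomposable C X) :
    (∃ (Y' Z' : C) (x : X ⟶ Y') (y : Y' ⟶ Z') (δ : Z' ⟶ X⟦(1 : ℤ)⟧),
      IsAlmostSplitTriangle C x y δ ∧
      ∀ D : C, D ∈ addSet C T → (∃ (i : D ⟶ Z') (p : Z' ⟶ D), i ≫ p = 𝟙 D) →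
        IsZero D) ∧
    (∃ (Z'' Y'' : C) (x : X⟦(-1 : ℤ)⟧ ⟶ Z'') (y : Z'' ⟶ Y'')
        (δ : Y'' ⟶ (X⟦(-1 : ℤ)⟧)⟦(1 : ℤ)⟧),
      IsAlmostSplitTriangle C x y δ ∧
      ∀ D : C, D ∈ addSet C T → (∃ (i : D ⟶ Z'') (p : Z'' ⟶ D), i ≫ p = 𝟙 D) →
        IsZero D) := by
  have := isLocalRing_end_of_indecomposable hKS hind
  obtain ⟨V₀, δ₀, hδ₀⟩ := exists_isSocleGenerator (k := k) hT hX
  obtain ⟨V, δ, _, hδ⟩ := hδ₀.exists_isLocalRing_end hKS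
  constructor
  · have := isLocalRing_end_obj (shiftFunctor C (1 : ℤ)) V
    obtain ⟨Y', x, y, h⟩ := (hδ.map (shiftFunctor C (1 : ℤ))).exists_isAlmostSplitTriangle
    exact ⟨Y', _, x, y, _, h, fun D hD ⟨i, p, hip⟩ ↦
      h.isZero_of_retract₃ ⟨i, p, hip⟩ (hT.hom_shift_eq_zero hD hX _)⟩
  · have := isLocalRing_end_obj (shiftFunctor C (-1 : ℤ)) X
    obtain ⟨Z'', x, y, h⟩ :=
      (hδ.comp_iso (shiftNegShift X (1 : ℤ)).symm).exists_isAlmostSplitTriangle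
    exact ⟨Z'', _, x, y, _, h, fun D hD ⟨i, p, hip⟩ ↦
      h.isZero_of_retract₂ ⟨i, p, hip⟩ (hT.hom_shift_neg_eq_zero hX hD _)⟩
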